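/- Let d ≥ 2 and ℓ, k ≥ 0 be integers, and let p : ℝ^d → ℂ be a harmonic homogeneous polynomial of degree ℓ (i.e. p(λx) = λ^ℓ p(x) for all λ ∈ ℝ and the sum of its second partial derivatives vanishes identically). Define the polynomial q(z) = Σ_{j=0}^{k} (−1)^j · binom(k,j) · (∏_{i=0}^{j−1} (ℓ+k+d/2+i)) / (∏_{i=0}^{j−1} (ℓ+d/2+i)) · z^j and set ψ(x) = q(‖x‖²) · p(x) for x ∈ ℝ^d. Then ψ is an eigenfunction of the d-dimensional Zernike operator with eigenvalue (ℓ+2k)(ℓ+2k+d): for every x ∈ ℝ^d, −Δψ(x) + (E²ψ)(x) + d·(Eψ)(x) = (ℓ+2k)(ℓ+2k+d)·ψ(x), where Δ is the Laplacian (sum of second partial derivatives), (Eψ)(x) = Σ_{i=1}^{d} x_i ∂ψ/∂x_i(x) is the Euler operator x·∇, and E² denotes applying E twice. -/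

import Mathlib

/-!
Everything takes place in the polynomial ring: `ψ` is the evaluation at real points of
`Q = ∑ j, c_j r^{2j} P`, where `r² = ∑ i, X i ^ 2`, and the analytic partial derivatives of an
evaluated polynomial are the evaluations of its formal ones (`pderivCoord_aeval`).

Since `r^{2j} P` is homogeneous of degree `ℓ + 2j`, Euler's identity makes it an eigenvector of
the Euler operator `E` with that eigenvalue, so `E² + d E` acts on it by `(ℓ + 2j)(ℓ + 2j + d)`.
The relation `Δ(r² F) = 2d F + 4 E F + r² ΔF` and harmonicity of `P` give
`Δ(r^{2(j+1)} P) = 2(j+1)(2j + d + 2ℓ) r^{2j} P` (`laplace_normSq_pow_succ_mul`). Comparing the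
coefficients of `r^{2j} P`, the eigenvalue equation becomes a two-term recursion for the `c_j`,
which the given quotients of rising factorials satisfy (`zernikeCoeff_succ`).
-/

open Finset

/-- Partial derivative of a function `ℝ^d → ℂ` in the `i`-th coordinate direction. -/
noncomputable def pderivCoord {d : ℕ} (i : Fin d) (ψ : (Fin d → ℝ) → ℂ) :
    (Fin d → ℝ) → ℂ :=
  fun x => deriv (fun t => ψ (Function.update x i t)) (x i)

/-- The Laplacian `Δψ = Σ_i ∂²ψ/∂x_i²`. -/
noncomputable def laplacian {d : ℕ} (ψ : (Fin d → ℝ) → ℂ) : (Fin d → ℝ) → ℂ :=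
  fun x => ∑ i, pderivCoord i (pderivCoord i ψ) x

/-- The Euler operator `(Eψ)(x) = Σ_i x_i ∂ψ/∂x_i(x) = (x·∇)ψ(x)`. -/
noncomputable def eulerOp {d : ℕ} (ψ : (Fin d → ℝ) → ℂ) : (Fin d → ℝ) → ℂ :=
  fun x => ∑ i, (x i : ℂ) * pderivCoord i ψ x

open MvPolynomial in
lemma pderivCoord_aeval {d : ℕ} (i : Fin d) (Q : MvPolynomial (Fin d) ℂ) :
    pderivCoord i (fun x => aeval (fun i => (x i : ℂ)) Q)
      = fun x => aeval (fun i => (x i : ℂ)) (pderiv i Q) := by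
  funext x
  unfold pderivCoord
  apply HasDerivAt.deriv
  induction Q using MvPolynomial.induction_on with
  | C a => simpa using hasDerivAt_const (x i) a
  | add p q hp hq => simpa only [map_add] using hp.fun_add hq
  | mul_X p j hp =>
    have hX : HasDerivAt (fun t : ℝ => ((Function.update x i t j : ℝ) : ℂ))
        (aeval (fun i => (x i : ℂ)) (pderiv i (X j : MvPolynomial (Fin d) ℂ))) (x i) := by
      rcases eq_or_ne j i with rfl | h
      · simpa using (hasDerivAt_id (x j)).ofReal_comp
      · simpa [h, pderiv_X_of_ne h] using hasDerivAt_const (x i) (x j : ℂ)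
    have := hp.fun_mul hX
    simp only [Function.update_eq_self] at this
    simp only [map_mul, aeval_X, Derivation.leibniz, map_add, smul_eq_mul]
    exact this.congr_deriv (by ring)

open MvPolynomial in
lemma eulerOp_aeval {d : ℕ} (Q : MvPolynomial (Fin d) ℂ) :
    eulerOp (fun x => aeval (fun i => (x i : ℂ)) Q)
      = fun x => aeval (fun i => (x i : ℂ)) (∑ i, X i * pderiv i Q) := by
  funext x
  simp only [eulerOp, pderivCoord_aeval, map_sum, map_mul, aeval_X]

open MvPolynomial in
lemma laplacian_aeval {d : ℕ} (Q : MvPolynomial (Fin d) ℂ) :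
    laplacian (fun x => aeval (fun i => (x i : ℂ)) Q)
      = fun x => aeval (fun i => (x i : ℂ)) (∑ i, pderiv i (pderiv i Q)) := by
  funext x
  simp only [laplacian, pderivCoord_aeval, map_sum]

open MvPolynomial in
/-- Commutation relation `Δ(r² F) = 2d F + 4 E F + r² ΔF`, where `E` is the Euler operator. -/
lemma laplace_normSq_mul {d : ℕ} (F : MvPolynomial (Fin d) ℂ) :
    ∑ i, pderiv i (pderiv i ((∑ j, X j ^ 2) * F))
      = (2 * d : ℂ) • F + (4 : ℂ) • ∑ i, X i * pderiv i F
        + (∑ j, X j ^ 2) * ∑ i, pderiv i (pderiv i F) := by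
  have h1 : ∀ i : Fin d, pderiv i (∑ j, X j ^ 2 : MvPolynomial (Fin d) ℂ) = 2 * X i := by
    intro i
    rw [map_sum, Finset.sum_eq_single i]
    · simp [pow_two, two_mul]
    · intro j _ hj
      simp [pow_two, pderiv_X_of_ne hj]
    · simp
  have h2 : ∀ i : Fin d, pderiv i (2 * X i : MvPolynomial (Fin d) ℂ) = 2 := by
    intro i
    simp [two_mul, one_add_one_eq_two]
  have h3 : ∀ i : Fin d, pderiv i (pderiv i ((∑ j, X j ^ 2) * F))
      = 2 * F + 4 * (X i * pderiv i F) + (∑ j, X j ^ 2) * pderiv i (pderiv i F) := by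
    intro i
    rw [pderiv_mul, h1, map_add, pderiv_mul (f := 2 * X i), h2, pderiv_mul, h1]
    ring
  simp only [h3, Finset.sum_add_distrib, ← Finset.mul_sum, Finset.sum_const, smul_eq_C_mul]
  have hC2 : (C 2 : MvPolynomial (Fin d) ℂ) = 2 := map_ofNat C 2
  have hC4 : (C 4 : MvPolynomial (Fin d) ℂ) = 4 := map_ofNat C 4
  simp [mul_assoc, mul_left_comm, hC2, hC4]

open MvPolynomial in
lemma normSq_pow_mul_isHomogeneous {d ℓ : ℕ} {P : MvPolynomial (Fin d) ℂ}
    (hP : P.IsHomogeneous ℓ) (j : ℕ) :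
    ((∑ i, X i ^ 2) ^ j * P).IsHomogeneous (2 * j + ℓ) := by
  refine IsHomogeneous.mul (IsHomogeneous.pow ?_ j) hP
  exact IsHomogeneous.sum _ _ _ fun i _ => by simpa using (isHomogeneous_X ℂ i).pow 2

open MvPolynomial in
lemma euler_normSq_pow_mul {d ℓ : ℕ} {P : MvPolynomial (Fin d) ℂ}
    (hP : P.IsHomogeneous ℓ) (j : ℕ) :
    ∑ i, X i * pderiv i ((∑ i, X i ^ 2) ^ j * P)
      = ((ℓ : ℂ) + 2 * j) • ((∑ i, X i ^ 2) ^ j * P) := by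
  rw [(normSq_pow_mul_isHomogeneous hP j).sum_X_mul_pderiv, smul_eq_C_mul, nsmul_eq_mul]
  have hC2 : (C 2 : MvPolynomial (Fin d) ℂ) = 2 := map_ofNat C 2
  simp only [map_add, map_mul, map_natCast, hC2]
  push_cast
  ring

open MvPolynomial in
/-- `Δ(r^{2(j+1)} P) = 2(j+1)(2j + d + 2ℓ) r^{2j} P` for `P` harmonic and homogeneous of
degree `ℓ`. -/
lemma laplace_normSq_pow_succ_mul {d ℓ : ℕ} {P : MvPolynomial (Fin d) ℂ}
    (hP : P.IsHomogeneous ℓ) (hP' : ∑ i, pderiv i (pderiv i P) = 0) (j : ℕ) :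
    ∑ i, pderiv i (pderiv i ((∑ i, X i ^ 2) ^ (j + 1) * P))
      = (2 * ((j : ℂ) + 1) * (2 * j + d + 2 * ℓ)) • ((∑ i, X i ^ 2) ^ j * P) := by
  induction j with
  | zero =>
    have hE := euler_normSq_pow_mul hP 0
    simp only [pow_zero, one_mul] at hE
    rw [zero_add, pow_one, pow_zero, one_mul, laplace_normSq_mul, hP', hE, mul_zero, add_zero,
      smul_smul, ← add_smul]
    congr 1
    push_cast
    ring
  | succ j ih =>
    rw [pow_succ', mul_assoc, laplace_normSq_mul, ih, euler_normSq_pow_mul hP, mul_smul_comm,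
      ← mul_assoc, ← pow_succ', smul_smul, ← add_smul, ← add_smul]
    congr 1
    push_cast
    ring

/-- The coefficient of `z ^ j` in the radial polynomial `q`. -/
noncomputable def zernikeCoeff (d ℓ k j : ℕ) : ℝ :=
  (-1 : ℝ) ^ j * (k.choose j : ℝ) *
    ((∏ i ∈ Finset.range j, ((ℓ : ℝ) + k + d / 2 + i)) /
      (∏ i ∈ Finset.range j, ((ℓ : ℝ) + d / 2 + i)))

/-- The two-term recursion that makes `∑ j, c_j r^{2j} P` an eigenfunction. It also holds at
`j = k`, where both sides vanish. -/
lemma zernikeCoeff_succ (d ℓ k j : ℕ) (hd : 2 ≤ d) (hj : j ≤ k) :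
    zernikeCoeff d ℓ k (j + 1) * (2 * ((j : ℝ) + 1) * (2 * j + d + 2 * ℓ))
      = zernikeCoeff d ℓ k j *
        ((ℓ + 2 * j) * (ℓ + 2 * j + d) - (ℓ + 2 * k) * (ℓ + 2 * k + d)) := by
  have hd0 : (0 : ℝ) < d := by exact_mod_cast (by omega : 0 < d)
  have hchoose : (k.choose (j + 1) : ℝ) * (j + 1) = k.choose j * (k - j) := by
    have := Nat.choose_succ_right_eq k j
    rw [← Nat.cast_sub hj]
    exact_mod_cast this
  have hne : ∀ i : ℕ, (ℓ : ℝ) + d / 2 + i ≠ 0 := fun i => by positivity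
  have hprod : (∏ i ∈ Finset.range j, ((ℓ : ℝ) + d / 2 + i)) ≠ 0 :=
    Finset.prod_ne_zero_iff.mpr fun i _ => hne i
  unfold zernikeCoeff
  rw [Finset.prod_range_succ, Finset.prod_range_succ, mul_div_mul_comm, pow_succ]
  set A := (∏ i ∈ Finset.range j, ((ℓ : ℝ) + k + d / 2 + i)) /
    (∏ i ∈ Finset.range j, ((ℓ : ℝ) + d / 2 + i))
  have h2 : ((ℓ : ℝ) + k + d / 2 + j) / (ℓ + d / 2 + j) * (2 * j + d + 2 * ℓ)
      = 2 * (ℓ + k + d / 2 + j) := by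
    have := hne j
    rw [div_mul_eq_mul_div, div_eq_iff this]
    ring
  linear_combination (-2 * (-1) ^ j * A * (k.choose (j + 1) : ℝ) * (j + 1)) * h2
    - 4 * (-1) ^ j * A * (ℓ + k + d / 2 + j) * hchoose

/-- If `p` is a harmonic homogeneous polynomial of degree `ℓ` on `ℝ^d`
and `q(z) = Σ_{j=0}^k (-1)^j C(k,j) (∏_{i<j}(ℓ+k+d/2+i))/(∏_{i<j}(ℓ+d/2+i)) z^j`,
then `ψ(x) = q(‖x‖²) p(x)` is an eigenfunction of the `d`-dimensional Zernike operator
`-Δ + (x·∇)² + d(x·∇)` with eigenvalue `(ℓ+2k)(ℓ+2k+d)`. -/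
theorem zernike_operator_eigenfunction (d ℓ k : ℕ) (hd : 2 ≤ d)
    (P : MvPolynomial (Fin d) ℂ)
    (hP_hom : P.IsHomogeneous ℓ)
    (hP_harm : (∑ i, MvPolynomial.pderiv i (MvPolynomial.pderiv i P)) = 0)
    (p : (Fin d → ℝ) → ℂ)
    (hp : ∀ x, p x = MvPolynomial.aeval (fun i => (x i : ℂ)) P)
    (hp_hom : ∀ (lam : ℝ) (x : Fin d → ℝ), p (fun i => lam * x i) = (lam : ℂ) ^ ℓ * p x)
    (q : ℝ → ℝ)
    (hq : ∀ z : ℝ, q z = ∑ j ∈ Finset.range (k + 1),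
        (-1 : ℝ) ^ j * (k.choose j : ℝ) *
          ((∏ i ∈ Finset.range j, ((ℓ : ℝ) + k + d / 2 + i)) /
            (∏ i ∈ Finset.range j, ((ℓ : ℝ) + d / 2 + i))) * z ^ j)
    (ψ : (Fin d → ℝ) → ℂ)
    (hψ : ∀ x, ψ x = (q (∑ i, x i ^ 2) : ℂ) * p x) :
    ∀ x : Fin d → ℝ,
      -laplacian ψ x + eulerOp (eulerOp ψ) x + (d : ℂ) * eulerOp ψ x
        = ((ℓ : ℂ) + 2 * k) * ((ℓ : ℂ) + 2 * k + d) * ψ x := by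
  -- `F j = r^{2j} P`, so that `ψ` is the evaluation of `Q = ∑ j, c_j F_j`.
  set F : ℕ → MvPolynomial (Fin d) ℂ := fun j => (∑ i, MvPolynomial.X i ^ 2) ^ j * P with hF
  set Q : MvPolynomial (Fin d) ℂ :=
    ∑ j ∈ Finset.range (k + 1), (zernikeCoeff d ℓ k j : ℂ) • F j with hQ
  have hψQ : ψ = fun x => MvPolynomial.aeval (fun i => (x i : ℂ)) Q := by
    funext x
    rw [hψ, hq, hp, hQ, map_sum, Complex.ofReal_sum, Finset.sum_mul]
    refine Finset.sum_congr rfl fun j _ => ?_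
    simp [hF, zernikeCoeff, mul_assoc]
  -- The Euler operator is diagonal on the `F j`, for arbitrary coefficients.
  have hE : ∀ a : ℕ → ℂ,
      ∑ i, MvPolynomial.X i * MvPolynomial.pderiv i (∑ j ∈ Finset.range (k + 1), a j • F j)
        = ∑ j ∈ Finset.range (k + 1), (a j * (ℓ + 2 * j)) • F j := by
    intro a
    simp only [map_sum, Finset.mul_sum, Derivation.map_smul, mul_smul_comm]
    rw [Finset.sum_comm]
    refine Finset.sum_congr rfl fun j _ => ?_
    rw [← Finset.smul_sum, hF, euler_normSq_pow_mul hP_hom, smul_smul]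
  have hL : ∑ i, MvPolynomial.pderiv i (MvPolynomial.pderiv i Q)
      = ∑ j ∈ Finset.range (k + 1), ((zernikeCoeff d ℓ k j : ℂ) *
          ((ℓ + 2 * j) * (ℓ + 2 * j + d) - (ℓ + 2 * k) * (ℓ + 2 * k + d))) • F j := by
    simp only [hQ, map_sum, Derivation.map_smul]
    rw [Finset.sum_comm, Finset.sum_range_succ', Finset.sum_range_succ]
    -- The `j = 0` term on the left is killed by harmonicity, the `j = k` term on the right
    -- by its coefficient.
    simp only [← Finset.smul_sum, sub_self, mul_zero, zero_smul, add_zero]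
    have h0 : ∑ i, MvPolynomial.pderiv i (MvPolynomial.pderiv i (F 0)) = 0 := by
      simpa [hF] using hP_harm
    rw [h0, smul_zero, add_zero]
    refine Finset.sum_congr rfl fun j hj => ?_
    rw [hF, laplace_normSq_pow_succ_mul hP_hom hP_harm, smul_smul]
    congr 1
    exact_mod_cast congrArg (fun r : ℝ => (r : ℂ))
      (zernikeCoeff_succ d ℓ k j hd (Finset.mem_range.mp hj).le)
  intro x
  rw [hψQ, laplacian_aeval, eulerOp_aeval, eulerOp_aeval, hL]
  simp only [hQ, hE]
  simp only [map_sum, map_smul, smul_eq_mul, Finset.mul_sum]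
  rw [← Finset.sum_neg_distrib, ← Finset.sum_add_distrib, ← Finset.sum_add_distrib]
  refine Finset.sum_congr rfl fun j _ => ?_
  ring
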